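/- Let {M_m} be a sequence of n×n symmetric matrices converging to 0 with M_m/‖M_m‖ → M, let μ ∈ ℝ^n with μ₁ ≥ … ≥ μ_n and blocks I₁,…,I_r, and let U_m → U be orthogonal matrices with Diag μ + M_m = U_m (Diag λ(Diag μ + M_m)) U_mᵀ for all m, where λ(·) is the vector of eigenvalues in nonincreasing order. Then for any indexes i ∈ I_l, j ∈ I_s, and t ∈ {1,…,r}, one has the first-order expansion Σ_{p ∈ I_t} U_m^{ip} U_m^{jp} = δ_{ij} δ_{lt} + ((δ_{lt} − δ_{st})/(μ_i − μ_j)) M^{ij} ‖M_m‖ + o(‖M_m‖), with the convention that the fraction is zero whenever δ_{lt} = δ_{st}, regardless of the denominator. -/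

import Mathlib

open scoped BigOperators
open Filter Asymptotics Matrix

attribute [local instance] Matrix.normedAddCommGroup

noncomputable section

/-- A `k`-tensor on `ℝ^n`, identified with its array of entries. -/
abbrev Tensor (k n : ℕ) : Type := (Fin k → Fin n) → ℝ

/-- A `2k`-tensor on `ℝ^n`, with its indices grouped into two groups of `k`. -/
abbrev Tensor2 (k n : ℕ) : Type := (Fin k → Fin n) → (Fin k → Fin n) → ℝ

/-- The `σ`-Hadamard product of `k` matrices:
`(H₁ ∘_σ ⋯ ∘_σ H_k)^{i₁…i_k} = ∏ s, H_s^{i_s i_{σ⁻¹(s)}}`. -/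
def hadamardProd {k n : ℕ} (σ : Equiv.Perm (Fin k))
    (H : Fin k → Matrix (Fin n) (Fin n) ℝ) : Tensor k n :=
  fun i => ∏ s, H s (i s) (i (σ⁻¹ s))

/-- The dot product of two `k`-tensors. -/
def tdot {k n : ℕ} (T₁ T₂ : Tensor k n) : ℝ :=
  ∑ p : Fin k → Fin n, T₁ p * T₂ p

/-- `Diag^σ T`, the `2k`-tensor equal to `T^{i₁…i_k}` when `i_s = j_{σ(s)}` for all `s`,
and `0` otherwise. -/
def diagPerm {k n : ℕ} (σ : Equiv.Perm (Fin k)) (T : Tensor k n) : Tensor2 k n :=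
  fun i j => if ∀ s, i s = j (σ s) then T i else 0

/-- A `2k`-tensor viewed as a `k`-tensor on matrix arguments:
`S[H₁,…,H_k] = ∑_{p,q} S^{p₁…p_k}_{q₁…q_k} ∏ s, H_s^{p_s q_s}`. -/
def apply2 {k n : ℕ} (S : Tensor2 k n)
    (H : Fin k → Matrix (Fin n) (Fin n) ℝ) : ℝ :=
  ∑ p : Fin k → Fin n, ∑ q : Fin k → Fin n, S p q * ∏ s, H s (p s) (q s)

/-- Conjugation `U S Uᵀ` of a `2k`-tensor `S` by a matrix `U`. -/
def conj2 {k n : ℕ} (U : Matrix (Fin n) (Fin n) ℝ) (S : Tensor2 k n) : Tensor2 k n :=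
  fun i j => ∑ p : Fin k → Fin n, ∑ q : Fin k → Fin n,
    S p q * ((∏ s, U (i s) (p s)) * ∏ s, U (j s) (q s))

/-- For a `2(k+1)`-tensor `S` viewed as a `(k+1)`-tensor on matrices, `S[H]` fixes the last
matrix argument to `H`, producing a `2k`-tensor. -/
def lastApply {k n : ℕ} (S : Tensor2 (k+1) n)
    (H : Matrix (Fin n) (Fin n) ℝ) : Tensor2 k n :=
  fun i j => ∑ a : Fin n, ∑ b : Fin n, S (Fin.snoc i a) (Fin.snoc j b) * H a b

/-- `T[x]`: contraction of the last index of a `(k+1)`-tensor against a vector. -/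
def contract {k n : ℕ} (T : Tensor (k+1) n) (x : Fin n → ℝ) : Tensor k n :=
  fun i => ∑ a : Fin n, T (Fin.snoc i a) * x a

/-- A permutation `σ` of `{1,…,k}` viewed as a permutation of `{1,…,k+1}` fixing `k+1`. -/
def extPerm {k : ℕ} (σ : Equiv.Perm (Fin k)) : Equiv.Perm (Fin (k+1)) :=
  (Equiv.permCongr finSuccEquivLast).symm σ.optionCongr

/-- `σ_{(l)} := σ ∘ τ_l`, where `τ_l` is the transposition `(l, k+1)` (and `σ` fixes `k+1`).
Here `l : Fin (k+1)`; taking `l = Fin.last k` gives `σ_{(k+1)} = σ`. -/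
def permIns {k : ℕ} (σ : Equiv.Perm (Fin k)) (l : Fin (k+1)) : Equiv.Perm (Fin (k+1)) :=
  extPerm σ * Equiv.swap l (Fin.last k)

/-- A tensor is `μ`-block-constant if its entries agree on componentwise `μ`-equivalent
multi-indices (`i ∼ j` iff `μ i = μ j`). -/
def BlockConstant {k n : ℕ} (μ : Fin n → ℝ) (T : Tensor k n) : Prop :=
  ∀ i j : Fin k → Fin n, (∀ s, μ (i s) = μ (j s)) → T i = T j

/-- `H_in`: the diagonal-block part of `H` (w.r.t. the blocks of `μ`). -/
def matIn {n : ℕ} (μ : Fin n → ℝ) (H : Matrix (Fin n) (Fin n) ℝ) :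
    Matrix (Fin n) (Fin n) ℝ :=
  Matrix.of fun i j => if μ i = μ j then H i j else 0

/-- `H_out = H - H_in`: the off-diagonal-block part of `H`. -/
def matOut {n : ℕ} (μ : Fin n → ℝ) (H : Matrix (Fin n) (Fin n) ℝ) :
    Matrix (Fin n) (Fin n) ℝ :=
  H - matIn μ H

/-- The divided-difference tensor `T^{(l)}_out` of a `k`-tensor `T`, a `(k+1)`-tensor. -/
def outDD {k n : ℕ} (μ : Fin n → ℝ) (T : Tensor k n) (l : Fin k) : Tensor (k+1) n :=
  fun i => if μ (i l.castSucc) = μ (i (Fin.last k)) then 0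
    else (T (Function.update (fun s => i s.castSucc) l (i (Fin.last k)))
          - T (fun s => i s.castSucc)) / (μ (i (Fin.last k)) - μ (i l.castSucc))

/-- `T^{τ_l}`: the `(k+1)`-tensor equal to `T^{i₁…i_k}` on the hyperplane `i_l = i_{k+1}`
and `0` elsewhere. -/
def liftTau {k n : ℕ} (T : Tensor k n) (l : Fin k) : Tensor (k+1) n :=
  fun i => if i l.castSucc = i (Fin.last k) then T (fun s => i s.castSucc) else 0

/-- `T^{τ_l}_in`: the "inflated" `(k+1)`-tensor, equal to
`T^{i₁…i_{l-1} i_{k+1} i_{l+1}…i_k}` when `μ_{i_l} = μ_{i_{k+1}}` and `0` otherwise. -/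
def liftTauIn {k n : ℕ} (μ : Fin n → ℝ) (T : Tensor k n) (l : Fin k) : Tensor (k+1) n :=
  fun i => if μ (i l.castSucc) = μ (i (Fin.last k))
    then T (Function.update (fun s => i s.castSucc) l (i (Fin.last k))) else 0

/-- `lam` is the map sending each symmetric matrix to the vector of its eigenvalues
ordered nonincreasingly: it is nonincreasing and realized by an orthogonal
diagonalization. -/
def IsEigCF {n : ℕ} (lam : Matrix (Fin n) (Fin n) ℝ → Fin n → ℝ) : Prop :=
  ∀ A : Matrix (Fin n) (Fin n) ℝ, A.IsSymm →
    Antitone (lam A) ∧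
    ∃ U : Matrix (Fin n) (Fin n) ℝ, Uᵀ * U = 1 ∧
      A = U * Matrix.diagonal (lam A) * Uᵀ

/-- `h` is the concatenated vector `(λ(X₁ᵀ A X₁), …, λ(X_rᵀ A X_r))` of the nonincreasingly
ordered eigenvalues of the diagonal blocks of `A` (blocks determined by `μ`):
equivalently, `h` is nonincreasing within each block of `μ` and `Diag h` is obtained from
`A_in` by conjugating with a block-diagonal orthogonal matrix. -/
def IsBlockEig {n : ℕ} (μ : Fin n → ℝ) (A : Matrix (Fin n) (Fin n) ℝ)
    (h : Fin n → ℝ) : Prop :=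
  (∀ i j : Fin n, i ≤ j → μ i = μ j → h j ≤ h i) ∧
  ∃ V : Matrix (Fin n) (Fin n) ℝ, Vᵀ * V = 1 ∧
    (∀ i j, μ i ≠ μ j → V i j = 0) ∧
    Vᵀ * matIn μ A * V = Matrix.diagonal h

/-! For orthogonal `U` and a block-constant `w = f ∘ μ`, put `B = U (Diag w) Uᵀ`; the block sums of
the theorem are the case where `f` is the indicator of one value of `μ`. Write the perturbed matrix
as `Diag μ + r N` with `N → H`. Its eigenvalues tend to `μ`, so the eigenvector equation
`(μ_i - λ_p) U_{ip} = -r (N U)_{ip}` gives `U_{ip} = O(r)` across blocks. By orthogonality of the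
rows, `B_{ij} - w_i δ_{ij} = ∑_p (w_p - w_i) U_{ip} U_{jp}`, which is `O(r)`, and even `O(r²)` when
`w_i = w_j`. Across blocks, `B` commutes with `Diag μ + r N`, whence
`(μ_i - μ_j) B_{ij} = r (B N - N B)_{ij}`, and `B → Diag w` yields the coefficient
`(w_i - w_j) / (μ_i - μ_j) * H_{ij}`. -/

theorem isCompact_unitaryGroup {𝕜 ι : Type*} [RCLike 𝕜] [Fintype ι] [DecidableEq ι] :
    IsCompact (unitaryGroup ι 𝕜 : Set (Matrix ι ι 𝕜)) :=
  (isCompact_closedBall (0 : 𝕜) 1).matrix.of_isClosed_subset isClosed_unitary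
    fun _ hU i j => mem_closedBall_zero_iff.2 (entry_norm_bound_of_unitary hU i j)

theorem roots_charpoly_diagonal {R ι : Type*} [CommRing R] [IsDomain R] [Fintype ι]
    [DecidableEq ι] (d : ι → R) : (diagonal d).charpoly.roots = Finset.univ.val.map d := by
  rw [charpoly_diagonal]
  simpa only [Multiset.map_map] using!
    Polynomial.roots_multiset_prod_X_sub_C (Finset.univ.val.map d)

theorem eq_of_antitone_of_charpoly_diagonal_eq {R : Type*} [CommRing R] [IsDomain R] [LinearOrder R]
    {n : ℕ} {μ ν : Fin n → R} (hμ : Antitone μ) (hν : Antitone ν)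
    (h : (diagonal μ).charpoly = (diagonal ν).charpoly) : μ = ν := by
  have hmap : Finset.univ.val.map μ = Finset.univ.val.map ν := by
    rw [← roots_charpoly_diagonal, ← roots_charpoly_diagonal, h]
  rw [Fin.univ_val_map, Fin.univ_val_map, Multiset.coe_eq_coe] at hmap
  exact List.ofFn_injective (hmap.eq_of_sortedGE hμ.sortedGE_ofFn hν.sortedGE_ofFn)

theorem tendsto_antitone_eigenvalues {α : Type*} {l : Filter α} {n : ℕ}
    {A U : α → Matrix (Fin n) (Fin n) ℝ} {L : α → Fin n → ℝ}
    {B : Matrix (Fin n) (Fin n) ℝ} {μ : Fin n → ℝ}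
    (hU : ∀ a, U a ∈ orthogonalGroup (Fin n) ℝ) (hL : ∀ a, Antitone (L a))
    (hA : ∀ a, A a = U a * diagonal (L a) * (U a)ᵀ) (hAB : Tendsto A l (nhds B))
    (hμ : Antitone μ) (hB : B.charpoly = (diagonal μ).charpoly) : Tendsto L l (nhds μ) := by
  -- Along an ultrafilter, compactness of the orthogonal group makes the eigenvectors converge too.
  refine (tendsto_iff_ultrafilter _ _ _).2 fun g hg => ?_
  obtain ⟨V, hV, hUV⟩ : ∃ V ∈ orthogonalGroup (Fin n) ℝ, Tendsto U g (nhds V) :=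
    isCompact_unitaryGroup.ultrafilter_le_nhds (g.map U)
      (tendsto_principal.2 (.of_forall hU))
  have hdiag (a : α) : diagonal (L a) = (U a)ᵀ * A a * U a := by
    have hUU : (U a)ᵀ * U a = 1 := (mem_orthogonalGroup_iff' _ _).1 (hU a)
    rw [hA a, mul_assoc, mul_assoc, hUU, mul_one, ← mul_assoc, hUU, one_mul]
  have hlim : Tendsto (fun a => diagonal (L a)) g (nhds (Vᵀ * B * V)) := by
    simp only [hdiag]
    have hUVt : Tendsto (fun a => (U a)ᵀ) g (nhds Vᵀ) :=
      (continuous_id.matrix_transpose.tendsto V).comp hUV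
    exact (hUVt.mul (hAB.mono_left hg)).mul hUV
  set ν := (Vᵀ * B * V).diag
  have hLν : Tendsto L g (nhds ν) := by
    simpa only [Function.comp_def, diag_diagonal] using
      (continuous_matrix_diag.tendsto _).comp hlim
  have hdiag_ν : Vᵀ * B * V = diagonal ν :=
    tendsto_nhds_unique hlim ((continuous_id.matrix_diagonal.tendsto ν).comp hLν)
  have hν_anti : Antitone ν := isClosed_antitone.mem_of_tendsto hLν (.of_forall hL)
  have hchar : (diagonal ν).charpoly = (diagonal μ).charpoly := by
    have hVV : V * Vᵀ = 1 := (mem_orthogonalGroup_iff _ _).1 hV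
    rw [← hdiag_ν, mul_assoc, charpoly_mul_comm, mul_assoc, hVV, mul_one, hB]
  rwa [← eq_of_antitone_of_charpoly_diagonal_eq hν_anti hμ hchar]

section FirstOrder

variable {α ι : Type*} {l : Filter α} [Fintype ι] [DecidableEq ι]

theorem commute_mul_diagonal_mul {R κ : Type*} [CommRing R] [Fintype κ] {U : Matrix κ ι R}
    {V : Matrix ι κ R} (hVU : V * U = 1) (v w : ι → R) :
    Commute (U * diagonal v * V) (U * diagonal w * V) := by
  have hmul (v w : ι → R) :
      U * diagonal v * V * (U * diagonal w * V) = U * (diagonal v * diagonal w) * V := by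
    calc U * diagonal v * V * (U * diagonal w * V)
        = U * diagonal v * (V * U) * diagonal w * V := by simp only [Matrix.mul_assoc]
      _ = U * (diagonal v * diagonal w) * V := by
          rw [hVU, Matrix.mul_one, Matrix.mul_assoc U]
  rw [Commute, SemiconjBy, hmul, hmul, (commute_diagonal v w).eq]

theorem conj_diagonal_sub_diagonal_apply {R : Type*} [CommRing R] {U : Matrix ι ι R}
    (hU : U * Uᵀ = 1) (w : ι → R) (i j : ι) :
    (U * diagonal w * Uᵀ - diagonal w) i j = ∑ p, (w p - w i) * (U i p * U j p) := by
  have hrows : diagonal w i j = ∑ p, w i * (U i p * U j p) := by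
    rw [← mul_one (diagonal w), ← hU, diagonal_mul, mul_apply, Finset.mul_sum]
    rfl
  rw [Matrix.sub_apply, hrows, mul_apply, ← Finset.sum_sub_distrib]
  refine Finset.sum_congr rfl fun p _ => ?_
  rw [mul_diagonal, transpose_apply]
  ring

theorem sub_mul_apply_of_commute_diagonal_add_smul {R : Type*} [CommRing R] {μ : ι → R} {r : R}
    {B N : Matrix ι ι R} (h : Commute B (diagonal μ + r • N)) (i j : ι) :
    (μ i - μ j) * B i j = r * (B * N - N * B) i j := by
  have hij := congrFun₂ h.eq i j
  simp only [mul_add, add_mul, Matrix.mul_smul, Matrix.add_apply, mul_diagonal, diagonal_mul,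
    smul_mul, Matrix.smul_apply, smul_eq_mul] at hij
  rw [Matrix.sub_apply]
  linear_combination -hij

theorem isLittleO_sub_mul_of_tendsto {𝕜 : Type*} [NormedField 𝕜] {f g r : α → 𝕜} {c : 𝕜}
    (hf : ∀ᶠ a in l, f a = g a * r a) (hg : Tendsto g l (nhds c)) :
    (fun a => f a - c * r a) =o[l] r := by
  refine isLittleO_iff_exists_eq_mul.2 ⟨fun a => g a - c, by simpa using hg.sub_const c, ?_⟩
  filter_upwards [hf] with a ha
  rw [ha, Pi.mul_apply, sub_mul]

theorem isBigO_unitary_apply {𝕜 : Type*} [RCLike 𝕜] {U : α → Matrix ι ι 𝕜}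
    (hU : ∀ a, U a ∈ unitaryGroup ι 𝕜) (i j : ι) :
    (fun a => U a i j) =O[l] (fun _ => (1 : ℝ)) :=
  isBigO_of_le l fun a => by simpa using entry_norm_bound_of_unitary (hU a) i j

theorem isBigO_eigenvector_apply {μ : ι → ℝ} {r : α → ℝ} {N U : α → Matrix ι ι ℝ}
    {L : α → ι → ℝ} {H : Matrix ι ι ℝ} (hN : Tendsto N l (nhds H))
    (hU : ∀ a, U a ∈ orthogonalGroup ι ℝ) (hL : Tendsto L l (nhds μ))
    (hA : ∀ a, diagonal μ + r a • N a = U a * diagonal (L a) * (U a)ᵀ)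
    {i p : ι} (hip : μ i ≠ μ p) : (fun a => U a i p) =O[l] r := by
  have heig (a : α) : (L a p - μ i) * U a i p = r a * (N a * U a) i p := by
    have hAU : (diagonal μ + r a • N a) * U a = U a * diagonal (L a) := by
      rw [hA, mul_assoc, (mem_orthogonalGroup_iff' _ _).1 (hU a), mul_one]
    have hentry := congrFun₂ hAU i p
    rw [add_mul, Matrix.add_apply, diagonal_mul, mul_diagonal, smul_mul, Matrix.smul_apply,
      smul_eq_mul] at hentry
    linear_combination -hentry
  have hgap : Tendsto (fun a => L a p - μ i) l (nhds (μ p - μ i)) :=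
    (hL.apply_nhds p).sub_const _
  have hgap_ne : μ p - μ i ≠ 0 := sub_ne_zero.2 hip.symm
  have hNU : (fun a => (N a * U a) i p) =O[l] (fun _ => (1 : ℝ)) := by
    simp only [mul_apply]
    refine IsBigO.fun_sum fun k _ => ?_
    simpa using ((hN.apply_nhds i).apply_nhds k).isBigO_one ℝ |>.mul (isBigO_unitary_apply hU k p)
  have hU_eq : (fun a => (L a p - μ i)⁻¹ * (r a * (N a * U a) i p)) =ᶠ[l] fun a => U a i p := by
    filter_upwards [hgap.eventually_ne hgap_ne] with a ha
    rw [← heig, inv_mul_cancel_left₀ ha]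
  refine hU_eq.symm.trans_isBigO ?_
  simpa using ((hgap.inv₀ hgap_ne).isBigO_one ℝ).mul ((isBigO_refl r l).mul hNU)

section AlmostBlockDiagonal

variable {r : α → ℝ} {U : α → Matrix ι ι ℝ} {w : ι → ℝ}

theorem isBigO_conj_diagonal_sub_apply (hU : ∀ a, U a ∈ orthogonalGroup ι ℝ)
    (hUw : ∀ i p, w i ≠ w p → (fun a => U a i p) =O[l] r) (i j : ι) :
    (fun a => (U a * diagonal w * (U a)ᵀ - diagonal w) i j) =O[l] r := by
  simp only [conj_diagonal_sub_diagonal_apply ((mem_orthogonalGroup_iff _ _).1 (hU _))]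
  refine IsBigO.fun_sum fun p _ => ?_
  rcases eq_or_ne (w i) (w p) with hp | hp
  · simpa [hp] using isBigO_zero r l
  · simpa using ((hUw i p hp).mul (isBigO_unitary_apply hU j p)).const_mul_left (w p - w i)

theorem isLittleO_conj_diagonal_sub_apply (hU : ∀ a, U a ∈ orthogonalGroup ι ℝ)
    (hr : Tendsto r l (nhds 0)) (hUw : ∀ i p, w i ≠ w p → (fun a => U a i p) =O[l] r)
    {i j : ι} (hij : w i = w j) :
    (fun a => (U a * diagonal w * (U a)ᵀ - diagonal w) i j) =o[l] r := by
  simp only [conj_diagonal_sub_diagonal_apply ((mem_orthogonalGroup_iff _ _).1 (hU _))]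
  refine IsLittleO.fun_sum fun p _ => ?_
  rcases eq_or_ne (w i) (w p) with hp | hp
  · simp [hp]
  · have hsq : (fun a => U a i p * U a j p) =O[l] fun a => r a * r a :=
      (hUw i p hp).mul (hUw j p (hij ▸ hp))
    have hr_sq : (fun a => r a * r a) =o[l] r := by
      simpa using ((isLittleO_one_iff ℝ).2 hr).mul_isBigO (isBigO_refl r l)
    exact (hsq.trans_isLittleO hr_sq).const_mul_left _

theorem tendsto_conj_diagonal (hU : ∀ a, U a ∈ orthogonalGroup ι ℝ) (hr : Tendsto r l (nhds 0))
    (hUw : ∀ i p, w i ≠ w p → (fun a => U a i p) =O[l] r) :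
    Tendsto (fun a => U a * diagonal w * (U a)ᵀ) l (nhds (diagonal w)) :=
  tendsto_pi_nhds.2 fun i => tendsto_pi_nhds.2 fun j =>
    tendsto_sub_nhds_zero_iff.1 ((isBigO_conj_diagonal_sub_apply hU hUw i j).trans_tendsto hr)

end AlmostBlockDiagonal

theorem isLittleO_apply_sub_of_commute {𝕜 : Type*} [NormedField 𝕜] {μ w : ι → 𝕜} {r : α → 𝕜}
    {B N : α → Matrix ι ι 𝕜} {H : Matrix ι ι 𝕜} (hN : Tendsto N l (nhds H))
    (hB : Tendsto B l (nhds (diagonal w))) (hcomm : ∀ a, Commute (B a) (diagonal μ + r a • N a))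
    {i j : ι} (hij : μ i ≠ μ j) :
    (fun a => B a i j - (w i - w j) / (μ i - μ j) * H i j * r a) =o[l] r := by
  have hgap : μ i - μ j ≠ 0 := sub_ne_zero.2 hij
  have hBij (a : α) : B a i j = (B a * N a - N a * B a) i j / (μ i - μ j) * r a := by
    rw [div_mul_eq_mul_div, eq_div_iff hgap]
    linear_combination sub_mul_apply_of_commute_diagonal_add_smul (hcomm a) i j
  have hlim : Tendsto (fun a => (B a * N a - N a * B a) i j / (μ i - μ j)) l
      (nhds ((diagonal w * H - H * diagonal w) i j / (μ i - μ j))) :=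
    ((((hB.mul hN).sub (hN.mul hB)).apply_nhds i).apply_nhds j).div_const _
  have hcoeff : (diagonal w * H - H * diagonal w) i j / (μ i - μ j)
      = (w i - w j) / (μ i - μ j) * H i j := by
    rw [Matrix.sub_apply, mul_diagonal, diagonal_mul]
    ring
  exact isLittleO_sub_mul_of_tendsto (Eventually.of_forall hBij) (hcoeff ▸ hlim)

end FirstOrder

theorem isLittleO_conj_diagonal_comp_sub_slope {α : Type*} {l : Filter α} {n : ℕ}
    {μ : Fin n → ℝ} (hμ : Antitone μ) {r : α → ℝ} (hr : Tendsto r l (nhds 0))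
    {N : α → Matrix (Fin n) (Fin n) ℝ} {H : Matrix (Fin n) (Fin n) ℝ} (hN : Tendsto N l (nhds H))
    {U : α → Matrix (Fin n) (Fin n) ℝ} (hU : ∀ a, U a ∈ orthogonalGroup (Fin n) ℝ)
    {L : α → Fin n → ℝ} (hL : ∀ a, Antitone (L a))
    (hA : ∀ a, diagonal μ + r a • N a = U a * diagonal (L a) * (U a)ᵀ)
    (f : ℝ → ℝ) (i j : Fin n) :
    (fun a => (U a * diagonal (f ∘ μ) * (U a)ᵀ) i j
        - (diagonal (f ∘ μ) i j + slope f (μ j) (μ i) * H i j * r a)) =o[l] r := by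
  have hlim : Tendsto (fun a => diagonal μ + r a • N a) l (nhds (diagonal μ)) := by
    simpa using (hr.smul hN).const_add (diagonal μ)
  have hLμ : Tendsto L l (nhds μ) := tendsto_antitone_eigenvalues hU hL hA hlim hμ rfl
  have hUw (i p : Fin n) (hip : (f ∘ μ) i ≠ (f ∘ μ) p) : (fun a => U a i p) =O[l] r :=
    isBigO_eigenvector_apply hN hU hLμ hA (ne_of_apply_ne f hip)
  -- Within a block the slope term is absent, since `slope f x x = 0`.
  rcases eq_or_ne (μ i) (μ j) with hij | hij
  · simpa [hij] using isLittleO_conj_diagonal_sub_apply hU hr hUw (congrArg f hij)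
  · have hcomm (a : α) :
        Commute (U a * diagonal (f ∘ μ) * (U a)ᵀ) (diagonal μ + r a • N a) :=
      hA a ▸ commute_mul_diagonal_mul ((mem_orthogonalGroup_iff' _ _).1 (hU a)) _ _
    have hne : i ≠ j := ne_of_apply_ne μ hij
    simpa [hne, slope_def_field] using
      isLittleO_apply_sub_of_commute hN (tendsto_conj_diagonal hU hr hUw) hcomm hij

theorem slope_ite_eq {𝕜 : Type*} [Field 𝕜] [DecidableEq 𝕜] (c x y : 𝕜) :
    slope (fun z => if z = c then (1 : 𝕜) else 0) y x = if x = c ↔ y = c then 0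
      else ((if x = c then (1 : 𝕜) else 0) - (if y = c then (1 : 𝕜) else 0)) / (x - y) := by
  by_cases hx : x = c <;> by_cases hy : y = c <;> simp [slope_def_field, hx, hy]

theorem statement8_general {α : Type*} {l : Filter α} {n : ℕ} {μ : Fin n → ℝ} (hμ : Antitone μ)
    {M : α → Matrix (Fin n) (Fin n) ℝ} (hM : Tendsto M l (nhds 0))
    {H : Matrix (Fin n) (Fin n) ℝ} (hH : Tendsto (fun a => ‖M a‖⁻¹ • M a) l (nhds H))
    {U : α → Matrix (Fin n) (Fin n) ℝ} (hU : ∀ a, (U a)ᵀ * U a = 1)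
    {L : α → Fin n → ℝ} (hL : ∀ a, Antitone (L a))
    (hdec : ∀ a, diagonal μ + M a = U a * diagonal (L a) * (U a)ᵀ) (i j t : Fin n) :
    (fun a => (∑ p, if μ p = μ t then U a i p * U a j p else 0)
        - ((if i = j then (1 : ℝ) else 0) * (if μ i = μ t then (1 : ℝ) else 0)
          + (if μ i = μ t ↔ μ j = μ t then (0 : ℝ)
              else ((if μ i = μ t then (1 : ℝ) else 0) - (if μ j = μ t then (1 : ℝ) else 0))
                / (μ i - μ j))
            * H i j * ‖M a‖)) =o[l] (fun a => ‖M a‖) := by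
  let _ : NormedSpace ℝ (Matrix (Fin n) (Fin n) ℝ) := Matrix.normedSpace
  have hA (a : α) : diagonal μ + ‖M a‖ • (‖M a‖⁻¹ • M a)
      = U a * diagonal (L a) * (U a)ᵀ :=
    (congrArg (diagonal μ + ·) (NormedSpace.norm_smul_normalize (M a))).trans (hdec a)
  refine (isLittleO_conj_diagonal_comp_sub_slope hμ (tendsto_norm_zero.comp hM) hH
    (fun a => (mem_orthogonalGroup_iff' _ _).2 (hU a)) hL hA
    (fun x => if x = μ t then 1 else 0) i j).congr_left fun a => ?_
  rw [slope_ite_eq]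
  by_cases hij : i = j <;> simp [hij, mul_apply, diagonal_apply]

/-- Theorem `important`, part 3. With `M_m → 0` symmetric,
`M_m/‖M_m‖ → M`, `μ` nonincreasing, and orthogonal `U_m → U` satisfying
`Diag μ + M_m = U_m (Diag λ(Diag μ + M_m)) U_mᵀ`: for any indices `i ∈ I_l`, `j ∈ I_s`
and any block `I_t` (represented by any of its members `t'`, so `I_t = {p | μ p = μ t'}`,
`δ_{lt} = δ_{μ i, μ t'}`, `δ_{st} = δ_{μ j, μ t'}`), one has the first-order expansion
`∑_{p ∈ I_t} U_m^{ip}U_m^{jp}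
  = δ_{ij}δ_{lt} + ((δ_{lt}-δ_{st})/(μ_i-μ_j)) M^{ij}‖M_m‖ + o(‖M_m‖)`,
the fraction being `0` whenever `δ_{lt} = δ_{st}`. -/
theorem statement8 {n : ℕ}
    (μ : Fin n → ℝ) (hμ : Antitone μ)
    (lam : Matrix (Fin n) (Fin n) ℝ → Fin n → ℝ) (hlam : IsEigCF lam)
    (M : ℕ → Matrix (Fin n) (Fin n) ℝ) (hMsym : ∀ m, (M m).IsSymm)
    (hM0 : Tendsto M atTop (nhds 0))
    (Mlim : Matrix (Fin n) (Fin n) ℝ)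
    (hMdir : Tendsto (fun m => ‖M m‖⁻¹ • M m) atTop (nhds Mlim))
    (U : ℕ → Matrix (Fin n) (Fin n) ℝ) (hUo : ∀ m, (U m)ᵀ * U m = 1)
    (Ulim : Matrix (Fin n) (Fin n) ℝ) (hUlim : Tendsto U atTop (nhds Ulim))
    (hdec : ∀ m, Matrix.diagonal μ + M m
      = U m * Matrix.diagonal (lam (Matrix.diagonal μ + M m)) * (U m)ᵀ)
    (i j t' : Fin n)
    : (fun m => (∑ p : Fin n, if μ p = μ t' then U m i p * U m j p else 0)
        - ((if i = j then (1:ℝ) else 0) * (if μ i = μ t' then (1:ℝ) else 0)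
          + (if (μ i = μ t') ↔ (μ j = μ t') then (0:ℝ)
              else ((if μ i = μ t' then (1:ℝ) else 0) - (if μ j = μ t' then (1:ℝ) else 0))
                    / (μ i - μ j))
            * Mlim i j * ‖M m‖))
      =o[atTop] (fun m => ‖M m‖) :=
  statement8_general hμ hM0 hMdir hUo
    (fun m => (hlam _ ((isSymm_diagonal μ).add (hMsym m))).1) hdec i j t'

end
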